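/- Fix a function g : ℕ → ℝ_{>0} and q ≥ 0 with q ≠ 1. There exists a rate function u such that the stationary distribution corresponding to u in the PALRMP (with general rate parameters) is NOT factorised, but the stationary distribution corresponding to u in the homogeneous PALRMP is factorised with one-point function f(n) = g(n). -/

import Mathlib

open scoped Classical

namespace LRMP

/-- A rate function: `u m n` is positive when the departure site is occupied
(`m ≥ 1`) and zero when it is empty (`m = 0`). -/
def IsRate (u : ℕ → ℕ → ℝ) : Prop :=
  (∀ m n : ℕ, 1 ≤ m → 0 < u m n) ∧ ∀ n : ℕ, u 0 n = 0

/-- The configuration `η^{k,ℓ}`: one particle moved from site `k` to site `ℓ`. -/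
def move (L : ℕ) (η : ZMod L → ℕ) (k ℓ : ZMod L) : ZMod L → ℕ :=
  fun a => if a = k then η a - 1 else if a = ℓ then η a + 1 else η a

/-- Every site strictly between `k` and `ℓ`, moving clockwise from `k`, is empty in `η`. -/
def RightClear (L : ℕ) (η : ZMod L → ℕ) (k ℓ : ZMod L) : Prop :=
  ∀ i : ℕ, 0 < i → i < (ℓ - k).val → η (k + (i : ZMod L)) = 0

/-- Every site strictly between `k` and `ℓ`, moving counterclockwise from `k`, is empty in `η`. -/
def LeftClear (L : ℕ) (η : ZMod L → ℕ) (k ℓ : ZMod L) : Prop :=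
  ∀ i : ℕ, 0 < i → i < (k - ℓ).val → η (k - (i : ZMod L)) = 0

/-- The total rate of the transition `η → η^{k,ℓ}` in the PALRMP with rate function `u`,
rate parameters `x` and asymmetry parameter `q`: a clockwise (right) hop contributes
`x ℓ * u (η k) (η ℓ)` and a counterclockwise (left) hop contributes `q * x ℓ * u (η k) (η ℓ)`. -/
noncomputable def hopRate (L : ℕ) (u : ℕ → ℕ → ℝ) (x : ZMod L → ℝ) (q : ℝ)
    (η : ZMod L → ℕ) (k ℓ : ZMod L) : ℝ :=
  (if k ≠ ℓ ∧ 1 ≤ η k ∧ RightClear L η k ℓ then x ℓ * u (η k) (η ℓ) else 0) +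
  (if k ≠ ℓ ∧ 1 ≤ η k ∧ LeftClear L η k ℓ then q * (x ℓ * u (η k) (η ℓ)) else 0)

/-- The incoming probability current into `η`: the sum over pairs `(k, ℓ)` of the
probability current due to the transition into `η` in which a particle moves from
site `k` to site `ℓ` (coming from the configuration `η^{ℓ,k} = move L η ℓ k`). -/
noncomputable def inflow (L : ℕ) [NeZero L] (u : ℕ → ℕ → ℝ) (x : ZMod L → ℝ) (q : ℝ)
    (π : (ZMod L → ℕ) → ℝ) (η : ZMod L → ℕ) : ℝ :=
  ∑ k : ZMod L, ∑ ℓ : ZMod L,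
    if 1 ≤ η ℓ then π (move L η ℓ k) * hopRate L u x q (move L η ℓ k) k ℓ else 0

/-- The outgoing probability current out of `η`. -/
noncomputable def outflow (L : ℕ) [NeZero L] (u : ℕ → ℕ → ℝ) (x : ZMod L → ℝ) (q : ℝ)
    (π : (ZMod L → ℕ) → ℝ) (η : ZMod L → ℕ) : ℝ :=
  ∑ k : ZMod L, ∑ ℓ : ZMod L, π η * hopRate L u x q η k ℓ

/-- `π` satisfies the master (balance) equation of the PALRMP on `Ω_{L,N}`:
for every configuration `η` with `N` particles, the incoming probability current
equals the outgoing probability current. -/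
def IsStationary (L : ℕ) [NeZero L] (N : ℕ) (u : ℕ → ℕ → ℝ) (x : ZMod L → ℝ) (q : ℝ)
    (π : (ZMod L → ℕ) → ℝ) : Prop :=
  ∀ η : ZMod L → ℕ, (∑ a, η a) = N → inflow L u x q π η = outflow L u x q π η

/-- The stationary distribution corresponding to the rate `u` in the PALRMP with
asymmetry parameter `q` is factorised, with one-point function `f`: for every
`L ≥ 2`, `N ≥ 1` and all positive rate parameters `x`, the factorised distribution
`η ↦ ∏_ℓ f (x ℓ) (η ℓ)` (up to normalisation) is stationary. -/
def FactorisedPALRMP (u : ℕ → ℕ → ℝ) (q : ℝ) (f : ℝ → ℕ → ℝ) : Prop :=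
  (∀ (x : ℝ) (n : ℕ), 0 < x → 0 < f x n) ∧
  ∀ (L N : ℕ) [NeZero L], 2 ≤ L → 1 ≤ N →
    ∀ x : ZMod L → ℝ, (∀ ℓ, 0 < x ℓ) →
      IsStationary L N u x q (fun η => ∏ ℓ, f (x ℓ) (η ℓ))

/-- The stationary distribution corresponding to the rate `u` in the homogeneous
PALRMP (all rate parameters equal to `1`) with asymmetry parameter `q` is factorised,
with one-point function `f`. -/
def FactorisedHomog (u : ℕ → ℕ → ℝ) (q : ℝ) (f : ℕ → ℝ) : Prop :=
  (∀ n : ℕ, 0 < f n) ∧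
  ∀ (L N : ℕ) [NeZero L], 2 ≤ L → 1 ≤ N →
    IsStationary L N u (fun _ => (1 : ℝ)) q (fun η => ∏ ℓ, f (η ℓ))

end LRMP

namespace LRMP

noncomputable def uu (g : ℕ → ℝ) (t : ℝ) (m n : ℕ) : ℝ :=
  if m = 0 then 0 else
    (g 0 * g (m + n) + if 1 ≤ n ∧ 2 ≤ m then t * g 1 * g (m + n - 1) else 0) / (g m * g n)

noncomputable def FF (t : ℝ) (a : ℕ) : ℝ := if a = 0 then -1 else if 2 ≤ a then t else 0

noncomputable def occ (a : ℕ) : ℝ := if 1 ≤ a then 1 else 0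

lemma uu_zero (g : ℕ → ℝ) (t : ℝ) (n : ℕ) : uu g t 0 n = 0 := by simp [uu]

lemma uu_pos (g : ℕ → ℝ) (hg : ∀ n, 0 < g n) (t : ℝ) (ht : 0 < t) (m n : ℕ) (hm : 1 ≤ m) :
    0 < uu g t m n := by
  have h0 := hg 0
  have h1 := hg 1
  have h2 := hg m
  have h3 := hg n
  have h4 := hg (m + n)
  have h5 := hg (m + n - 1)
  unfold uu
  rw [if_neg (by omega)]
  split_ifs <;> positivity

lemma uu_inv (g : ℕ → ℝ) (hg : ∀ n, 0 < g n) (t : ℝ) (a b : ℕ) :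
    g (b + 1) * g a * uu g t (b + 1) a = g (a + 1) * g b * uu g t (a + 1) b := by
  have h0 := (hg (b+1)).ne'
  have h1 := (hg a).ne'
  have h2 := (hg (a+1)).ne'
  have h3 := (hg b).ne'
  unfold uu
  rw [if_neg (Nat.succ_ne_zero b), if_neg (Nat.succ_ne_zero a)]
  have e : b + 1 + a = a + 1 + b := by omega
  rw [e]
  have e2 : (1 ≤ a ∧ 2 ≤ b + 1) ↔ (1 ≤ b ∧ 2 ≤ a + 1) := by
    constructor <;> rintro ⟨_, _⟩ <;> constructor <;> omega
  rw [if_congr e2 rfl rfl]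
  field_simp

lemma uu_diff (g : ℕ → ℝ) (hg : ∀ n, 0 < g n) (t : ℝ) (a b : ℕ) :
    uu g t a b - uu g t b a = occ b * FF t a - occ a * FF t b := by
  have h0 := (hg 0).ne'
  have h1 := (hg 1).ne'
  have h2 := (hg a).ne'
  have h3 := (hg b).ne'
  have e : b + a = a + b := by omega
  rcases a with _ | _ | a <;> rcases b with _ | _ | b <;>
    simp [uu, occ, FF] <;> simp at * <;> try field_simp
  · rw [show 1 + (b + 1 + 1) = b + 1 + 1 + 1 by omega]; ring
  · rw [show 1 + (a + 1 + 1) = a + 1 + 1 + 1 by omega]; ring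
  · rw [show b + 1 + 1 + (a + 1 + 1) = a + 1 + 1 + (b + 1 + 1) by omega]
    rw [show b + 1 + 1 + (a + 1) = a + 1 + 1 + (b + 1) by omega]; ring

lemma left_iff_right (L : ℕ) [NeZero L] (η : ZMod L → ℕ) (k ℓ : ZMod L) :
    LeftClear L η k ℓ ↔ RightClear L η ℓ k := by
  have key : ∀ i : ℕ, i < (k - ℓ).val → k - (i : ZMod L) = ℓ + (((k - ℓ).val - i : ℕ) : ZMod L) := by
    intro i hi
    rw [Nat.cast_sub hi.le, ZMod.natCast_zmod_val]; ring
  constructor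
  · intro h i hi hi2
    have := h ((k - ℓ).val - i) (by omega) (by omega)
    rw [key _ (by omega)] at this
    rwa [show (k - ℓ).val - ((k - ℓ).val - i) = i by omega] at this
  · intro h i hi hi2
    rw [key _ hi2]
    exact h _ (by omega) (by omega)

noncomputable def RR (L : ℕ) (η : ZMod L → ℕ) (k ℓ : ZMod L) : ℝ :=
  if k ≠ ℓ ∧ RightClear L η k ℓ then 1 else 0

lemma out_eq (L : ℕ) [NeZero L] (η : ZMod L → ℕ) (k : ZMod L) :
    ∑ ℓ, RR L η k ℓ * occ (η ℓ) = if ∃ ℓ, ℓ ≠ k ∧ 1 ≤ η ℓ then 1 else 0 := by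
  split_ifs with h
  · obtain ⟨l0, hl0, hmin⟩ := Finset.exists_min_image
      (Finset.univ.filter fun ℓ : ZMod L => ℓ ≠ k ∧ 1 ≤ η ℓ) (fun ℓ => (ℓ - k).val)
      (by obtain ⟨l, hl⟩ := h; exact ⟨l, by simpa using hl⟩)
    simp only [Finset.mem_filter, Finset.mem_univ, true_and] at hl0 hmin
    rw [Finset.sum_eq_single l0]
    · have : RightClear L η k l0 := by
        intro i hi hi2
        by_contra hne
        have hiL : i < L := hi2.trans (ZMod.val_lt _)
        have hv : (k + (i : ZMod L) - k).val = i := by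
          rw [add_sub_cancel_left, ZMod.val_natCast_of_lt hiL]
        have := hmin (k + (i : ZMod L)) ⟨?_, by omega⟩
        · omega
        · intro he
          rw [he] at hv
          simp at hv
          omega
      simp [RR, occ, this, hl0.1.symm, hl0.2]
    · intro l _ hl
      by_contra hne
      have hR : k ≠ l ∧ RightClear L η k l := by
        by_contra hc; exact hne (by simp only [RR, if_neg hc, zero_mul])
      have ho : 1 ≤ η l := by
        by_contra hc; exact hne (by simp only [occ, if_neg hc, mul_zero])
      have hle := hmin l ⟨hR.1.symm, ho⟩
      rcases hle.lt_or_eq with hlt | heq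
      · have := hR.2 (l0 - k).val (by
          rw [Nat.pos_iff_ne_zero, Ne, ZMod.val_eq_zero, sub_eq_zero]; exact hl0.1) hlt
        rw [ZMod.natCast_zmod_val, add_sub_cancel] at this
        omega
      · have := ZMod.val_injective L heq
        exact hl (sub_left_injective this).symm
    · simp
  · push Not at h
    apply Finset.sum_eq_zero
    intro l _
    by_cases hl : l = k
    · simp [RR, hl]
    · have := h l hl
      have : ¬ 1 ≤ η l := by omega
      simp [occ, this]

lemma RR_neg (L : ℕ) [NeZero L] (η : ZMod L → ℕ) (k ℓ : ZMod L) :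
    RR L (fun a => η (-a)) (-k) (-ℓ) = RR L η ℓ k := by
  have : RightClear L (fun a => η (-a)) (-k) (-ℓ) ↔ RightClear L η ℓ k := by
    rw [← left_iff_right L η]
    simp only [RightClear, LeftClear]
    have e : -ℓ - -k = k - ℓ := by ring
    have e2 : ∀ i : ℕ, -(-k + (i : ZMod L)) = k - i := fun i => by ring
    simp only [e, e2]
  simp only [RR, this, Ne, neg_inj, eq_comm]

lemma in_eq (L : ℕ) [NeZero L] (η : ZMod L → ℕ) (k : ZMod L) :
    ∑ ℓ, RR L η ℓ k * occ (η ℓ) = if ∃ ℓ, ℓ ≠ k ∧ 1 ≤ η ℓ then 1 else 0 := by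
  have h := out_eq L (fun a => η (-a)) (-k)
  rw [← Equiv.sum_comp (Equiv.neg (ZMod L))] at h
  simp only [Equiv.neg_apply, RR_neg, neg_neg] at h
  rw [h]
  congr 1
  apply propext
  constructor
  · rintro ⟨l, h1, h2⟩
    exact ⟨-l, fun h => h1 (by rw [← h, neg_neg]), h2⟩
  · rintro ⟨l, h1, h2⟩
    exact ⟨-l, fun h => h1 (neg_injective h), by simpa using h2⟩

lemma cyc (L : ℕ) [NeZero L] (η : ZMod L → ℕ) (F : ℕ → ℝ) :
    ∑ k, ∑ ℓ, RR L η k ℓ * (occ (η ℓ) * F (η k) - occ (η k) * F (η ℓ)) = 0 := by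
  have h1 : ∑ k, ∑ ℓ, RR L η k ℓ * (occ (η ℓ) * F (η k))
      = ∑ k, F (η k) * ∑ ℓ, RR L η k ℓ * occ (η ℓ) := by
    simp only [Finset.mul_sum]
    exact Finset.sum_congr rfl fun _ _ => Finset.sum_congr rfl fun _ _ => by ring
  have h2 : ∑ k, ∑ ℓ, RR L η k ℓ * (occ (η k) * F (η ℓ))
      = ∑ k, F (η k) * ∑ ℓ, RR L η ℓ k * occ (η ℓ) := by
    rw [Finset.sum_comm]
    simp only [Finset.mul_sum]
    exact Finset.sum_congr rfl fun _ _ => Finset.sum_congr rfl fun _ _ => by ring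
  simp only [mul_sub, Finset.sum_sub_distrib]
  rw [h1, h2]
  simp only [out_eq, in_eq, sub_self]

lemma hop_eq (L : ℕ) [NeZero L] (u : ℕ → ℕ → ℝ) (hu : ∀ n, u 0 n = 0) (q : ℝ)
    (η : ZMod L → ℕ) (k ℓ : ZMod L) :
    hopRate L u (fun _ => 1) q η k ℓ = u (η k) (η ℓ) * (RR L η k ℓ + q * RR L η ℓ k) := by
  unfold hopRate RR
  simp only [left_iff_right]
  by_cases h : k = ℓ
  · simp [h]
  by_cases h0 : η k = 0
  · simp [h0, hu]
  have h1 : 1 ≤ η k := by omega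
  have h' : ℓ ≠ k := fun e => h e.symm
  simp only [ne_eq, h, h', h1, not_false_eq_true, true_and]
  split_ifs <;> ring

lemma clear_move (L : ℕ) [NeZero L] (η : ZMod L → ℕ) (k ℓ : ZMod L) :
    RightClear L (move L η ℓ k) k ℓ ↔ RightClear L η k ℓ := by
  unfold RightClear
  refine forall_congr' fun i => forall_congr' fun hi => forall_congr' fun hi2 => ?_
  have hiL : i < L := hi2.trans (ZMod.val_lt _)
  have hv : ((i : ZMod L)).val = i := ZMod.val_natCast_of_lt hiL
  have h1 : k + (i : ZMod L) ≠ k := by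
    intro h
    have : (i : ZMod L) = 0 := by simpa using h
    rw [this] at hv; simp at hv; omega
  have h2 : k + (i : ZMod L) ≠ ℓ := by
    intro h
    rw [← h, add_sub_cancel_left, hv] at hi2; omega
  simp [move, h1, h2]

lemma clear_move' (L : ℕ) [NeZero L] (η : ZMod L → ℕ) (k ℓ : ZMod L) :
    RightClear L (move L η ℓ k) ℓ k ↔ RightClear L η ℓ k := by
  unfold RightClear
  refine forall_congr' fun i => forall_congr' fun hi => forall_congr' fun hi2 => ?_
  have hiL : i < L := hi2.trans (ZMod.val_lt _)
  have hv : ((i : ZMod L)).val = i := ZMod.val_natCast_of_lt hiL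
  have h1 : ℓ + (i : ZMod L) ≠ ℓ := by
    intro h
    have : (i : ZMod L) = 0 := by simpa using h
    rw [this] at hv; simp at hv; omega
  have h2 : ℓ + (i : ZMod L) ≠ k := by
    intro h
    rw [← h, add_sub_cancel_left, hv] at hi2; omega
  simp [move, h1, h2]

lemma prod_two {L : ℕ} [NeZero L] (F : ZMod L → ℝ) (k ℓ : ZMod L) (h : k ≠ ℓ) :
    ∏ a, F a = F k * F ℓ * ∏ a ∈ (Finset.univ.erase k).erase ℓ, F a := by
  rw [mul_assoc, Finset.mul_prod_erase _ F (by simp [h.symm]), Finset.mul_prod_erase _ F (by simp)]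

lemma in_term (L : ℕ) [NeZero L] (g : ℕ → ℝ) (hg : ∀ n, 0 < g n) (t q : ℝ)
    (η : ZMod L → ℕ) (k ℓ : ZMod L) :
    (if 1 ≤ η ℓ then (∏ a, g (move L η ℓ k a)) *
      hopRate L (uu g t) (fun _ => 1) q (move L η ℓ k) k ℓ else 0)
    = (∏ a, g (η a)) * (uu g t (η ℓ) (η k) * (RR L η k ℓ + q * RR L η ℓ k)) := by
  by_cases hkl : k = ℓ
  · subst hkl
    simp [hopRate, RR]
  by_cases h0 : η ℓ = 0
  · simp [h0, uu_zero]
  rw [if_pos (by omega), hop_eq _ _ (uu_zero g t)]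
  have e1 : RR L (move L η ℓ k) k ℓ = RR L η k ℓ := by simp only [RR, clear_move]
  have e2 : RR L (move L η ℓ k) ℓ k = RR L η ℓ k := by simp only [RR, clear_move']
  rw [e1, e2, prod_two _ k ℓ hkl, prod_two (fun a => g (η a)) k ℓ hkl]
  have e3 : ∏ a ∈ (Finset.univ.erase k).erase ℓ, g (move L η ℓ k a)
      = ∏ a ∈ (Finset.univ.erase k).erase ℓ, g (η a) := by
    refine Finset.prod_congr rfl fun a ha => ?_
    simp only [Finset.mem_erase, Finset.mem_univ, and_true] at ha
    simp [move, ha.1, ha.2]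
  rw [e3]
  have mk : move L η ℓ k k = η k + 1 := by simp [move, hkl]
  have ml : move L η ℓ k ℓ = η ℓ - 1 := by simp [move]
  rw [mk, ml]
  obtain ⟨a, ha⟩ := Nat.exists_eq_succ_of_ne_zero h0
  rw [ha]
  simp only [Nat.succ_eq_add_one, Nat.add_sub_cancel]
  have := uu_inv g hg t a (η k)
  linear_combination (RR L η k ℓ + q * RR L η ℓ k) *
    (∏ a ∈ (Finset.univ.erase k).erase ℓ, g (η a)) * this

lemma homog (g : ℕ → ℝ) (hg : ∀ n, 0 < g n) (t q : ℝ) : FactorisedHomog (uu g t) q g := by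
  refine ⟨hg, ?_⟩
  intro L N _ _ _ η _
  unfold inflow outflow
  simp only [in_term L g hg t q]
  simp only [hop_eq _ _ (uu_zero g t), ← Finset.mul_sum]
  congr 1
  have h := cyc L η (FF t)
  simp only [← uu_diff g hg t] at h
  have c : ∀ v : ℕ → ℕ → ℝ, ∑ k, ∑ ℓ, v (η k) (η ℓ) * RR L η ℓ k
      = ∑ k, ∑ ℓ, v (η ℓ) (η k) * RR L η k ℓ := fun v => Finset.sum_comm
  have h' : ∑ k, ∑ ℓ, uu g t (η k) (η ℓ) * RR L η k ℓ
      = ∑ k, ∑ ℓ, uu g t (η ℓ) (η k) * RR L η k ℓ := by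
    rw [← sub_eq_zero, ← h]
    simp only [← Finset.sum_sub_distrib]
    exact Finset.sum_congr rfl fun _ _ => Finset.sum_congr rfl fun _ _ => by ring
  have c1 := c (uu g t)
  have c2 := c (fun a b => uu g t b a)
  have s1 : ∀ v w : ZMod L → ZMod L → ℝ, ∑ k, ∑ ℓ, v k ℓ * (w k ℓ + q * w ℓ k)
    = ∑ k, ∑ ℓ, v k ℓ * w k ℓ + q * ∑ k, ∑ ℓ, v k ℓ * w ℓ k := by
    intro v w
    simp only [Finset.mul_sum, ← Finset.sum_add_distrib]
    exact Finset.sum_congr rfl fun _ _ => Finset.sum_congr rfl fun _ _ => by ring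
  rw [s1 (fun k ℓ => uu g t (η ℓ) (η k)) (RR L η), s1 (fun k ℓ => uu g t (η k) (η ℓ)) (RR L η)]
  rw [c1, c2, h']

lemma two_bal (u : ℕ → ℕ → ℝ) (hu : ∀ n, u 0 n = 0) (q : ℝ) (hq : 0 ≤ q) (f : ℝ → ℕ → ℝ)
    (hf : FactorisedPALRMP u q f) (x y : ℝ) (hx : 0 < x) (hy : 0 < y) (a b : ℕ)
    (hab : 1 ≤ a + b) :
    f x a * f y b * (y * u a b + x * u b a) =
      (if 1 ≤ a then f x (a - 1) * f y (b + 1) * (x * u (b + 1) (a - 1)) else 0) +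
      (if 1 ≤ b then f x (a + 1) * f y (b - 1) * (y * u (a + 1) (b - 1)) else 0) := by
  obtain ⟨η, e0, e1⟩ : ∃ η : ZMod 2 → ℕ, η 0 = a ∧ η 1 = b := ⟨![a, b], rfl, rfl⟩
  obtain ⟨X, X0, X1⟩ : ∃ X : ZMod 2 → ℝ, X 0 = x ∧ X 1 = y := ⟨![x, y], rfl, rfl⟩
  have h := hf.2 2 (a + b) le_rfl hab X
    (by intro l; fin_cases l; exacts [X0 ▸ hx, X1 ▸ hy])
    η (by rw [← e0, ← e1]; exact Fin.sum_univ_two _)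
  have hR : ∀ (η : ZMod 2 → ℕ) k ℓ, RightClear 2 η k ℓ := by
    intro η k ℓ i hi hi2
    have := ZMod.val_lt (ℓ - k)
    omega
  have hL : ∀ (η : ZMod 2 → ℕ) k ℓ, LeftClear 2 η k ℓ := fun η k ℓ =>
    (left_iff_right 2 η k ℓ).2 (hR _ _ _)
  have sm : ∀ F : ZMod 2 → ℝ, ∑ k, F k = F 0 + F 1 := fun F => Fin.sum_univ_two F
  have pm : ∀ F : ZMod 2 → ℝ, ∏ k, F k = F 0 * F 1 := fun F => Fin.prod_univ_two F
  have n1 : (0 : ZMod 2) ≠ 1 := by decide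
  simp only [inflow, outflow, hopRate, hR, hL, sm, pm, move, n1, n1.symm, ne_eq, not_true_eq_false,
    false_and, if_false, if_true, not_false_eq_true, true_and, and_true, add_zero, zero_add,
    mul_zero, ite_self, e0, e1, X0, X1, Nat.le_add_left] at h
  have ea : ∀ c : ℝ, (if 1 ≤ a then c * u a b else 0) = c * u a b := by
    intro c; split_ifs with h
    · rfl
    · rw [show a = 0 by omega, hu, mul_zero]
  have eb : ∀ c : ℝ, (if 1 ≤ b then c * u b a else 0) = c * u b a := by
    intro c; split_ifs with h
    · rfl
    · rw [show b = 0 by omega, hu, mul_zero]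
  simp only [← mul_assoc] at h
  simp only [ea, eb] at h
  have q1 : (1 + q) ≠ 0 := by positivity
  apply mul_left_cancel₀ q1
  split_ifs at h ⊢ <;> linear_combination -h

lemma det_bal (u : ℕ → ℕ → ℝ) (hu : ∀ n, u 0 n = 0) (q : ℝ) (hq : 0 ≤ q) (f : ℝ → ℕ → ℝ)
    (hf : FactorisedPALRMP u q f) (x y : ℝ) (hx : 0 < x) (hy : 0 < y) (b : ℕ) :
    ∀ a, f x (a + 1) * f y b * (y * u (a + 1) b) = f x a * f y (b + 1) * (x * u (b + 1) a) := by
  induction b with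
  | zero =>
    intro a
    have := two_bal u hu q hq f hf x y hx hy (a + 1) 0 (by omega)
    simpa [hu] using this
  | succ b ih =>
    intro a
    have := two_bal u hu q hq f hf x y hx hy (a + 1) (b + 1) (by omega)
    have i := ih (a + 1)
    simp at this
    linear_combination this + i

lemma three (u : ℕ → ℕ → ℝ) (hu : ∀ n, u 0 n = 0) (q : ℝ) (hq : 0 ≤ q) (hq1 : q ≠ 1)
    (f : ℝ → ℕ → ℝ) (hf : FactorisedPALRMP u q f) : u 2 1 = u 1 1 := by
  have D := det_bal u hu q hq f hf
  obtain ⟨η, e0, e1, e2⟩ : ∃ η : ZMod 3 → ℕ, η 0 = 2 ∧ η 1 = 1 ∧ η 2 = 1 :=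
    ⟨![2, 1, 1], rfl, rfl, rfl⟩
  obtain ⟨X, X0, X1, X2⟩ : ∃ X : ZMod 3 → ℝ, X 0 = 1 ∧ X 1 = 2 ∧ X 2 = 1 :=
    ⟨![1, 2, 1], rfl, rfl, rfl⟩
  have h := hf.2 3 4 (by norm_num) (by norm_num) X
    (by intro l; fin_cases l; exacts [X0 ▸ one_pos, X1 ▸ two_pos, X2 ▸ one_pos])
    η (by rw [show (4 : ℕ) = η 0 + η 1 + η 2 by rw [e0, e1, e2]]; exact Fin.sum_univ_three _)
  have hR : ∀ (η : ZMod 3 → ℕ) k ℓ, RightClear 3 η k ℓ ↔ (ℓ = k + 2 → η (k + 1) = 0) := by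
    intro η k ℓ
    constructor
    · rintro h rfl
      have := h 1 (by norm_num) (by rw [add_sub_cancel_left]; decide)
      simpa using this
    · intro h i hi hi2
      have h3 := ZMod.val_lt (ℓ - k)
      have hi1 : i = 1 := by omega
      have hv : (ℓ - k).val = 2 := by omega
      have : ℓ - k = 2 := ZMod.val_injective 3 (by rw [hv]; decide)
      subst hi1
      simpa using h (by rw [← this]; ring)
  have sm : ∀ F : ZMod 3 → ℝ, ∑ k, F k = F 0 + F 1 + F 2 := fun F => Fin.sum_univ_three F
  have pm : ∀ F : ZMod 3 → ℝ, ∏ k, F k = F 0 * F 1 * F 2 := fun F => Fin.prod_univ_three F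
  have n1 : (0 : ZMod 3) ≠ 1 := by decide
  have n2 : (0 : ZMod 3) ≠ 2 := by decide
  have n3 : (1 : ZMod 3) ≠ 2 := by decide
  have s1 : (1 : ZMod 3) + 1 = 2 := by decide
  have s2 : (1 : ZMod 3) + 2 = 0 := by decide
  have s3 : (2 : ZMod 3) + 1 = 0 := by decide
  have s4 : (2 : ZMod 3) + 2 = 1 := by decide
  simp only [inflow, outflow, hopRate, left_iff_right, hR, sm, pm, move, n1, n1.symm, n2, n2.symm,
    n3, n3.symm, s1, s2, s3, s4, ne_eq, not_true_eq_false,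
    false_and, if_false, if_true, not_false_eq_true, true_and, and_true, add_zero, zero_add,
    mul_zero, ite_self, e0, e1, e2, X0, X1, X2, Nat.le_add_left] at h
  norm_num at h
  have p1 := hf.1 1 1 (by norm_num)
  have p2 := hf.1 1 2 (by norm_num)
  have p3 := hf.1 2 1 (by norm_num)
  have d1 := D 1 2 (by norm_num) (by norm_num) 0 2
  have d2 := D 1 2 (by norm_num) (by norm_num) 1 1
  have d3 := D 1 1 (by norm_num) (by norm_num) 0 2
  have d5 := D 1 2 (by norm_num) (by norm_num) 0 1
  have d6 := D 1 2 (by norm_num) (by norm_num) 1 0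
  norm_num at d1 d2 d3 d5 d6
  have hP : f 1 2 * f 2 1 * f 1 1 * (q - 1) ≠ 0 :=
    mul_ne_zero (by positivity) (sub_ne_zero.2 hq1)
  apply mul_left_cancel₀ hP
  linear_combination h - f 1 1 * d1 + q * f 1 1 * d2 - q * f 2 1 * d3 - q * f 1 2 * d5 + f 1 2 * d6

/-- there is a rate function `u` whose stationary distribution in the
PALRMP is not factorised, but whose stationary distribution in the homogeneous PALRMP
is factorised with one-point function `g`. -/
theorem exists_rate_homog_not_inhomog
    (g : ℕ → ℝ) (hg : ∀ n, 0 < g n)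
    (q : ℝ) (hq : 0 ≤ q) (hq1 : q ≠ 1) :
    ∃ u : ℕ → ℕ → ℝ, IsRate u ∧
      (¬ ∃ f : ℝ → ℕ → ℝ, FactorisedPALRMP u q f) ∧
      FactorisedHomog u q g := by
  have h0 := hg 0
  have h1 := hg 1
  have h2 := hg 2
  have h3 := hg 3
  have ht : 0 < g 0 * g 2 / (g 1 * g 1) := by positivity
  refine ⟨uu g (g 0 * g 2 / (g 1 * g 1)), ⟨fun m n hm => uu_pos g hg _ ht m n hm, uu_zero g _⟩,
    ?_, homog g hg _ q⟩
  rintro ⟨f, hf⟩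
  have h := three _ (uu_zero g _) q hq hq1 f hf
  have e : uu g (g 0 * g 2 / (g 1 * g 1)) 2 1 =
      g 0 * g 3 / (g 2 * g 1) + g 0 * g 2 / (g 1 * g 1) := by
    simp [uu]; field_simp
  have e' : uu g (g 0 * g 2 / (g 1 * g 1)) 1 1 = g 0 * g 2 / (g 1 * g 1) := by
    simp [uu]
  rw [e, e'] at h
  have : 0 < g 0 * g 3 / (g 2 * g 1) := by positivity
  linarith

end LRMP
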